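/- arXiv:1804.00360 — 2 statements merged into one kernel-verified Lean document; each statement's English description precedes it below -/
import Mathlib

section
/- Let G be a finite simple graph on vertex set V and let A, B be distinct stable sets of G. Then e_A and e_B form an edge of the stable set polytope SSP(G) (i.e., the segment [e_A, e_B] is a face of SSP(G)) if and only if for all stable sets C, D of G, the equality e_A + e_B = e_C + e_D implies {A, B} = {C, D}. -/
variable {V : Type*} [Fintype V] [DecidableEq V]

/-- Indicator vector of a finite set of vertices. -/
def indVec (A : Finset V) : V → ℝ := fun v => if v ∈ A then 1 else 0

/-- A set of vertices is stable if no two of its elements are adjacent. -/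
def IsStable (G : SimpleGraph V) (A : Finset V) : Prop :=
  ∀ v ∈ A, ∀ w ∈ A, ¬ G.Adj v w

/-- Stable set polytope of `G`: convex hull of the indicator vectors of stable sets. -/
def SSP (G : SimpleGraph V) : Set (V → ℝ) :=
  convexHull ℝ {x | ∃ A : Finset V, IsStable G A ∧ x = indVec A}

/-!
Call `y ∈ SSP G` tight for `A`, `B` if it satisfies with equality every inequality `0 ≤ x v`,
`x v ≤ 1`, `x u + x v ≤ 1` (for `u` adjacent to `v`) that is tight along the whole segment
`[e_A, e_B]`. The tight points form a face. Replacing `y` by `1 - y` off `A` turns the tight edge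
inequalities between `A` and `B` into equalities of the values at adjacent vertices, so the set `K`
of vertices of `A ∆ B` carrying a given value is closed under adjacency between `A` and `B`. Then
`A ∆ K` and `B ∆ K` are stable with `e_{A ∆ K} + e_{B ∆ K} = e_A + e_B`, and uniqueness of the
decomposition forces `K = A ∆ B`: a single value `t` occurs, and `y = t e_A + (1 - t) e_B`.

Conversely, if `e_A + e_B = e_C + e_D` then `[e_A, e_B]` and `[e_C, e_D]` have the same midpoint, so
`e_C` lies on `[e_A, e_B]` when the latter is a face. As `e_C` is an extreme point of the unit cube,
it is `e_A` or `e_B`.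
-/

open Set
open scoped symmDiff

theorem isExtreme_sep_eq_of_convexOn {𝕜 E β : Type*} [Semiring 𝕜] [PartialOrder 𝕜] [AddCommMonoid E]
    [SMul 𝕜 E] [AddCommMonoid β] [LinearOrder β] [IsOrderedCancelAddMonoid β] [Module 𝕜 β]
    [PosSMulStrictMono 𝕜 β] {s : Set E} {f : E → β} {c : β} (hf : ConvexOn 𝕜 s f)
    (hfc : ∀ x ∈ s, f x ≤ c) : IsExtreme 𝕜 s {x ∈ s | f x = c} := by
  refine ⟨sep_subset _ _, fun y hy z hz x ⟨_, hfx⟩ hxyz => ⟨hy, (hfc y hy).antisymm ?_⟩⟩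
  rw [← hfx]
  exact hf.le_left_of_right_le hy hz hxyz ((hfc z hz).trans_eq hfx.symm)

theorem convexOn_eval {𝕜 ι : Type*} [Semiring 𝕜] [PartialOrder 𝕜] {s : Set (ι → 𝕜)}
    (hs : Convex 𝕜 s) (i : ι) : ConvexOn 𝕜 s fun x => x i :=
  (LinearMap.proj i).convexOn hs

section

variable {V : Type*} {G : SimpleGraph V} {A B C K : Finset V}

theorem IsStable.notMem_of_adj (hA : IsStable G A) {u v : V} (hu : u ∈ A) (huv : G.Adj u v) :
    v ∉ A :=
  fun hv => hA u hu v hv huv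

variable [DecidableEq V]

theorem indVec_injective : Function.Injective (indVec : Finset V → V → ℝ) := by
  intro A B h
  ext v
  have hv : indVec A v = indVec B v := congrFun h v
  by_cases hvA : v ∈ A <;> by_cases hvB : v ∈ B <;> simp_all [indVec]

theorem indVec_mem_extremePoints_Icc (A : Finset V) :
    indVec A ∈ (Icc (0 : V → ℝ) 1).extremePoints ℝ := by
  rw [← pi_univ_Icc, extremePoints_pi]
  intro v _
  by_cases hv : v ∈ A <;> simp [indVec, hv]

theorem eq_or_eq_of_indVec_mem_segment (h : indVec C ∈ segment ℝ (indVec A) (indVec B)) :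
    A = C ∨ B = C := by
  obtain ⟨-, hC⟩ := mem_extremePoints_iff_forall_segment.1 (indVec_mem_extremePoints_Icc C)
  exact (hC _ (indVec_mem_extremePoints_Icc A).1 _ (indVec_mem_extremePoints_Icc B).1 h).imp
    (fun hAC => indVec_injective hAC) (fun hBC => indVec_injective hBC)

theorem indVec_symmDiff_add_indVec_symmDiff (hK : K ⊆ A ∆ B) :
    indVec (A ∆ K) + indVec (B ∆ K) = indVec A + indVec B := by
  ext v
  have hv := @hK v
  by_cases hvA : v ∈ A <;> by_cases hvB : v ∈ B <;> by_cases hvK : v ∈ K <;>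
    simp_all [indVec, Finset.mem_symmDiff]

theorem IsStable.symmDiff (hA : IsStable G A) (hB : IsStable G B) (hK : K ⊆ A ∆ B)
    (hadj : ∀ u ∈ A, ∀ v ∈ B, G.Adj u v → (u ∈ K ↔ v ∈ K)) : IsStable G (A ∆ K) := by
  have mem_B {v : V} (hvK : v ∈ K) (hvA : v ∉ A) : v ∈ B := by
    have := hK hvK
    grind [Finset.mem_symmDiff]
  intro u hu v hv huv
  rcases Finset.mem_symmDiff.1 hu with ⟨huA, huK⟩ | ⟨huK, huA⟩ <;>
    rcases Finset.mem_symmDiff.1 hv with ⟨hvA, hvK⟩ | ⟨hvK, hvA⟩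
  · exact hA.notMem_of_adj huA huv hvA
  · exact huK ((hadj u huA v (mem_B hvK hvA) huv).2 hvK)
  · exact hvK ((hadj v hvA u (mem_B huK huA) huv.symm).2 huK)
  · exact hB.notMem_of_adj (mem_B huK huA) huv (mem_B hvK hvA)

/-- The only way to write `e_A + e_B` as the sum of two vertices of `SSP G` is the obvious one, up
to the order of the summands. -/
def HasUniqueDecomposition (G : SimpleGraph V) (A B : Finset V) : Prop :=
  ∀ C D : Finset V, IsStable G C → IsStable G D →
    indVec A + indVec B = indVec C + indVec D → ({A, B} : Set (Finset V)) = {C, D}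

theorem HasUniqueDecomposition.eq_symmDiff (h : HasUniqueDecomposition G A B) (hA : IsStable G A)
    (hB : IsStable G B) (hK : K ⊆ A ∆ B) (hne : K.Nonempty)
    (hadj : ∀ u ∈ A, ∀ v ∈ B, G.Adj u v → (u ∈ K ↔ v ∈ K)) : K = A ∆ B := by
  have hAK : IsStable G (A ∆ K) := hA.symmDiff hB hK hadj
  have hBK : IsStable G (B ∆ K) := hB.symmDiff hA (symmDiff_comm A B ▸ hK)
    fun u hu v hv huv => (hadj v hv u hu huv.symm).symm
  have hmem : A ∆ K ∈ ({A, B} : Set (Finset V)) := by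
    rw [h _ _ hAK hBK (indVec_symmDiff_add_indVec_symmDiff hK).symm]
    exact mem_insert _ _
  rcases hmem with hAK_eq | hAK_eq
  · exact absurd (symmDiff_eq_left.1 hAK_eq) hne.ne_empty
  · rw [← hAK_eq, symmDiff_symmDiff_cancel_left]

theorem HasUniqueDecomposition.eq_of_forall_adj (h : HasUniqueDecomposition G A B)
    (hA : IsStable G A) (hB : IsStable G B) {α : Type*} {f : V → α}
    (hf : ∀ u ∈ A, ∀ v ∈ B, G.Adj u v → f u = f v) {u v : V} (hu : u ∈ A ∆ B)
    (hv : v ∈ A ∆ B) : f u = f v := by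
  classical
  let K : Finset V := {w ∈ A ∆ B | f w = f v}
  have hadj : ∀ a ∈ A, ∀ b ∈ B, G.Adj a b → (a ∈ K ↔ b ∈ K) := by
    intro a ha b hb hab
    have haB : a ∉ B := hB.notMem_of_adj hb hab.symm
    have hbA : b ∉ A := hA.notMem_of_adj ha hab
    simp [K, Finset.mem_symmDiff, ha, hb, haB, hbA, hf a ha b hb hab]
  have hK : K = A ∆ B :=
    h.eq_symmDiff hA hB (Finset.filter_subset _ _) ⟨v, by simp [K, hv]⟩ hadj
  exact (Finset.mem_filter.1 (hK ▸ hu : u ∈ K)).2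

theorem IsStable.indVec_mem_SSP (hA : IsStable G A) : indVec A ∈ SSP G :=
  subset_convexHull ℝ _ ⟨A, hA, rfl⟩

theorem SSP_subset_Icc (G : SimpleGraph V) : SSP G ⊆ Icc 0 1 := by
  refine convexHull_min ?_ (convex_Icc 0 1)
  rintro _ ⟨A, -, rfl⟩
  exact (indVec_mem_extremePoints_Icc A).1

theorem add_le_one_of_mem_SSP_of_adj {x : V → ℝ} (hx : x ∈ SSP G) {u v : V} (huv : G.Adj u v) :
    x u + x v ≤ 1 := by
  have hconvexOn : ConvexOn ℝ univ fun x : V → ℝ => x u + x v :=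
    (convexOn_eval convex_univ u).add (convexOn_eval convex_univ v)
  have hconvex : Convex ℝ {x : V → ℝ | x u + x v ≤ 1} := by
    simpa using hconvexOn.convex_le 1
  refine convexHull_min ?_ hconvex hx
  rintro _ ⟨A, hA, rfl⟩
  have hA_uv := hA u
  by_cases hu : u ∈ A <;> by_cases hv : v ∈ A <;> simp_all [indVec]

/-- For stable `A` and `B`, the face of `SSP G` cut out by those of the inequalities `0 ≤ x v`,
`x v ≤ 1` and `x u + x v ≤ 1` (for `u` adjacent to `v`) that hold with equality at both `e_A` and
`e_B`. An edge inequality of this kind either joins `A` to `B` or has one end in `A ∩ B` and the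
other outside `A ∪ B`; in the second case it follows from the vertex equalities and is omitted. -/
def tightFace (G : SimpleGraph V) (A B : Finset V) : Set (V → ℝ) :=
  {x ∈ SSP G | (∀ v, v ∉ A → v ∉ B → x v = 0) ∧ (∀ v ∈ A, v ∈ B → x v = 1) ∧
    ∀ u ∈ A, ∀ v ∈ B, G.Adj u v → x u + x v = 1}

theorem isExtreme_tightFace (G : SimpleGraph V) (A B : Finset V) :
    IsExtreme ℝ (SSP G) (tightFace G A B) := by
  have hconvex : Convex ℝ (SSP G) := convex_convexHull ℝ _
  refine ⟨sep_subset _ _, fun y hy z hz x ⟨hx, hx₀, hx₁, hx₂⟩ hxyz => ?_⟩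
  have tight {f : (V → ℝ) → ℝ} {c : ℝ} (hf : ConvexOn ℝ (SSP G) f) (hfc : ∀ w ∈ SSP G, f w ≤ c)
      (hfx : f x = c) : f y = c :=
    ((isExtreme_sep_eq_of_convexOn hf hfc).left_mem_of_mem_openSegment hy hz ⟨hx, hfx⟩ hxyz).2
  refine ⟨hy, fun v hvA hvB => ?_, fun v hvA hvB => ?_, fun u hu v hv huv => ?_⟩
  · exact neg_eq_zero.1 <| tight ((LinearMap.proj v).concaveOn hconvex).neg
      (fun w hw => neg_nonpos.2 ((SSP_subset_Icc G hw).1 v)) (neg_eq_zero.2 (hx₀ v hvA hvB))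
  · exact tight (convexOn_eval hconvex v) (fun w hw => (SSP_subset_Icc G hw).2 v) (hx₁ v hvA hvB)
  · exact tight ((convexOn_eval hconvex u).add (convexOn_eval hconvex v))
      (fun w hw => add_le_one_of_mem_SSP_of_adj hw huv) (hx₂ u hu v hv huv)

theorem segment_subset_tightFace (hA : IsStable G A) (hB : IsStable G B) :
    segment ℝ (indVec A) (indVec B) ⊆ tightFace G A B := by
  intro x hx
  refine ⟨(convex_convexHull ℝ _).segment_subset hA.indVec_mem_SSP hB.indVec_mem_SSP hx, ?_⟩
  obtain ⟨a, b, -, -, hab, rfl⟩ := hx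
  refine ⟨fun v hvA hvB => ?_, fun v hvA hvB => ?_, fun u hu v hv huv => ?_⟩
  · simp [indVec, hvA, hvB]
  · simp [indVec, hvA, hvB, hab]
  · have huB : u ∉ B := hB.notMem_of_adj hv huv.symm
    have hvA : v ∉ A := hA.notMem_of_adj hu huv
    simp [indVec, hu, hv, huB, hvA, hab]

theorem HasUniqueDecomposition.exists_forall_mem_symmDiff_eq (h : HasUniqueDecomposition G A B)
    (hA : IsStable G A) (hB : IsStable G B) {y : V → ℝ} (hy : y ∈ tightFace G A B) :
    ∃ t ∈ Icc (0 : ℝ) 1, ∀ v ∈ A ∆ B, (if v ∈ A then y v else 1 - y v) = t := by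
  obtain ⟨hySSP, -, -, hy₂⟩ := hy
  obtain hempty | ⟨w, hw⟩ := (A ∆ B).eq_empty_or_nonempty
  · exact ⟨0, by simp, by simp [hempty]⟩
  refine ⟨if w ∈ A then y w else 1 - y w, ?_, fun v hv => h.eq_of_forall_adj hA hB
    (f := fun v => if v ∈ A then y v else 1 - y v) ?_ hv hw⟩
  · have hy_nonneg : 0 ≤ y w := (SSP_subset_Icc G hySSP).1 w
    have hy_le_one : y w ≤ 1 := (SSP_subset_Icc G hySSP).2 w
    split_ifs <;> constructor <;> linarith
  · intro u hu v hv huv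
    have hvA : v ∉ A := hA.notMem_of_adj hu huv
    simpa [hu, hvA] using eq_sub_of_add_eq (hy₂ u hu v hv huv)

theorem HasUniqueDecomposition.tightFace_subset_segment (h : HasUniqueDecomposition G A B)
    (hA : IsStable G A) (hB : IsStable G B) :
    tightFace G A B ⊆ segment ℝ (indVec A) (indVec B) := by
  intro y hy
  obtain ⟨t, ⟨ht₀, ht₁⟩, hyt⟩ := h.exists_forall_mem_symmDiff_eq hA hB hy
  obtain ⟨-, hy₀, hy₁, -⟩ := hy
  refine ⟨t, 1 - t, ht₀, sub_nonneg.2 ht₁, add_sub_cancel t 1, ?_⟩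
  ext v
  have hv := hyt v
  by_cases hvA : v ∈ A <;> by_cases hvB : v ∈ B
  · simp [indVec, hvA, hvB, hy₁ v hvA hvB]
  · simp_all [indVec, Finset.mem_symmDiff]
  · rw [← hv (by simp [Finset.mem_symmDiff, hvA, hvB])]
    simp [indVec, hvA, hvB]
  · simp [indVec, hvA, hvB, hy₀ v hvA hvB]

theorem HasUniqueDecomposition.isExtreme_segment (h : HasUniqueDecomposition G A B)
    (hA : IsStable G A) (hB : IsStable G B) :
    IsExtreme ℝ (SSP G) (segment ℝ (indVec A) (indVec B)) := by
  rw [(segment_subset_tightFace hA hB).antisymm (h.tightFace_subset_segment hA hB)]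
  exact isExtreme_tightFace G A B

theorem hasUniqueDecomposition_of_isExtreme_segment
    (h : IsExtreme ℝ (SSP G) (segment ℝ (indVec A) (indVec B))) :
    HasUniqueDecomposition G A B := by
  intro C D hC hD hsum
  have hmid : midpoint ℝ (indVec A) (indVec B) = midpoint ℝ (indVec C) (indVec D) := by
    simp only [midpoint_eq_smul_add, hsum]
  have hmem : indVec C ∈ segment ℝ (indVec A) (indVec B) :=
    h.left_mem_of_mem_openSegment hC.indVec_mem_SSP hD.indVec_mem_SSP (midpoint_mem_segment _ _)
      (hmid ▸ midpoint_mem_openSegment _ _)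
  rcases eq_or_eq_of_indVec_mem_segment hmem with rfl | rfl
  · rw [indVec_injective (add_left_cancel hsum)]
  · rw [add_comm] at hsum
    rw [indVec_injective (add_left_cancel hsum), pair_comm]

theorem edge_SSP_iff_general (hA : IsStable G A) (hB : IsStable G B) :
    IsExtreme ℝ (SSP G) (segment ℝ (indVec A) (indVec B)) ↔ HasUniqueDecomposition G A B :=
  ⟨hasUniqueDecomposition_of_isExtreme_segment, fun h => h.isExtreme_segment hA hB⟩

end

/-- Two distinct vertices `e_A`, `e_B` of the stable set polytope form an edge iff
`e_A + e_B` has a unique decomposition as a sum of two vertices. -/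
theorem edge_SSP_iff (G : SimpleGraph V) (A B : Finset V)
    (hA : IsStable G A) (hB : IsStable G B) (hAB : A ≠ B) :
    IsExtreme ℝ (SSP G) (segment ℝ (indVec A) (indVec B)) ↔
      ∀ C D : Finset V, IsStable G C → IsStable G D →
        indVec A + indVec B = indVec C + indVec D →
          ({A, B} : Set (Finset V)) = {C, D} :=
  edge_SSP_iff_general hA hB
end

section
/- Let P be the convex hull of a finite set of points in ℝ^d and let a and b be two distinct extreme points (vertices) of P. Then a and b do NOT form an edge of P if and only if there exist k ≥ 1 extreme points v_1, …, v_k of P, each distinct from a and from b, and real coefficients γ_1, …, γ_k > 0, such that a − b = Σ_{i=1}^k γ_i (v_i − b). -/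
/-!
Let `V` be the set of vertices of a polytope `P`, and let `L` be an affine subspace. The slice
`P ∩ L` is a face of `P` iff `L` misses the convex hull of the vertices lying outside `L`: since
`P` is contained in the union of the segments joining `L` to that convex hull `Q`, any point of `L`
inside a segment of `P` that leaves `L` would produce a point of `Q` in `L`. For two vertices `a`
and `b`, extremality forces the line through them to meet `P` exactly in `[a, b]`, so `[a, b]` is
not an edge iff that line meets the convex hull of the other vertices in some point `y`. Such a `y`
lies in `[a, b]` and differs from `b`, so it spans the ray from `b` through `a`; expanding `y` as a
convex combination turns this into a positive combination of the differences `v - b`.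
-/

open Set AffineSubspace
open scoped Affine

variable {𝕜 E : Type*} [Field 𝕜] [LinearOrder 𝕜] [IsStrictOrderedRing 𝕜] [AddCommGroup E]
  [Module 𝕜 E]

section AffineSlice

variable {L : AffineSubspace 𝕜 E} {V W : Set E}

theorem isExtreme_convexHull_coe_union (h : Disjoint (L : Set E) (convexHull 𝕜 W)) :
    IsExtreme 𝕜 (convexHull 𝕜 ((L : Set E) ∪ W)) L := by
  refine ⟨subset_union_left.trans (subset_convexHull 𝕜 _), fun x hx y hy z hz hzxy ↦ ?_⟩
  rcases W.eq_empty_or_nonempty with rfl | hW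
  · simpa [L.convex.convexHull_eq] using hx
  rw [convexHull_union ⟨z, hz⟩ hW, L.convex.convexHull_eq, mem_convexJoin] at hx hy
  obtain ⟨p, hp, q, hq, α, β, -, hβ, hαβ, rfl⟩ := hx
  obtain ⟨p', hp', q', hq', α', β', -, hβ', hαβ', rfl⟩ := hy
  obtain ⟨s, t, hs, ht, hst, hz_eq⟩ := hzxy
  rcases hβ.eq_or_lt with rfl | hβ
  · simpa [show α = 1 by simpa using hαβ] using hp
  have hσ : 0 < s * β + t * β' := by positivity
  obtain ⟨r, hr, hr_eq⟩ : ∃ r ∈ convexHull 𝕜 W,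
      (s * β + t * β') • r = (s * β) • q + (t * β') • q' :=
    (convex_convexHull 𝕜 W).exists_mem_add_smul_eq hq hq' (by positivity) (by positivity)
  -- `z` is an affine combination of points of `L` and `r`, with positive weight on `r`; so `r ∈ L`.
  have hdir : (s * β + t * β') • (r - z) ∈ L.direction := by
    have hrz : (s * β + t * β') • (r - z) = (s * α) • (z - p) + (t * α') • (z - p') := by
      rw [smul_sub, hr_eq]
      linear_combination (norm := module) hz_eq - hst • z - (s * hαβ) • z - (t * hαβ') • z
    rw [hrz]
    exact add_mem (Submodule.smul_mem _ _ (vsub_mem_direction hz hp))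
      (Submodule.smul_mem _ _ (vsub_mem_direction hz hp'))
  have hrL : r ∈ L := by
    simpa using vadd_mem_of_mem_direction ((Submodule.smul_mem_iff _ hσ.ne').1 hdir) hz
  exact (disjoint_left.1 h hrL hr).elim

theorem isExtreme_convexHull_inter_coe_iff :
    IsExtreme 𝕜 (convexHull 𝕜 V) (convexHull 𝕜 V ∩ L) ↔
      Disjoint (L : Set E) (convexHull 𝕜 (V \ L)) := by
  constructor
  · intro h
    have hsub : convexHull 𝕜 (V \ L) ⊆ convexHull 𝕜 V \ (convexHull 𝕜 V ∩ L) :=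
      convexHull_min (fun v hv ↦ ⟨subset_convexHull 𝕜 V hv.1, fun hvL ↦ hv.2 hvL.2⟩)
        (h.convex_sdiff (convex_convexHull 𝕜 V))
    exact disjoint_left.2 fun y hyL hy ↦ (hsub hy).2 ⟨(hsub hy).1, hyL⟩
  · intro h
    have hV : convexHull 𝕜 V ⊆ convexHull 𝕜 ((L : Set E) ∪ (V \ L)) :=
      convexHull_mono (by simp)
    refine ⟨inter_subset_left, fun x hx y hy z hz hzxy ↦ ⟨hx, ?_⟩⟩
    exact (isExtreme_convexHull_coe_union h).left_mem_of_mem_openSegment (hV hx) (hV hy) hz.2 hzxy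

end AffineSlice

section ExtremePoints

variable {C : Set E} {a b y : E}

theorem inter_line_eq_segment_of_mem_extremePoints (hC : Convex 𝕜 C) (ha : a ∈ C.extremePoints 𝕜)
    (hb : b ∈ C.extremePoints 𝕜) : C ∩ line[𝕜, a, b] = segment 𝕜 a b := by
  refine Subset.antisymm (fun y ⟨hyC, hy⟩ ↦ ?_) (subset_inter (hC.segment_subset ha.1 hb.1)
    fun y hy ↦ (mem_segment_iff_wbtw.1 hy).mem_affineSpan)
  obtain rfl | hab := eq_or_ne a b
  · simpa using hy
  rw [mem_extremePoints_iff_forall_segment] at ha hb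
  rcases (collinear_insert_of_mem_affineSpan_pair hy).wbtw_or_wbtw_or_wbtw with hyab | haby | hbya
  · rw [(ha.2 y hyC b hb.1 hyab.mem_segment).resolve_right hab.symm]
    exact left_mem_segment 𝕜 a b
  · rw [(hb.2 a ha.1 y hyC haby.mem_segment).resolve_left hab]
    exact right_mem_segment 𝕜 a b
  · exact hbya.symm.mem_segment

theorem extremePoints_sdiff_line (hC : Convex 𝕜 C) (ha : a ∈ C.extremePoints 𝕜)
    (hb : b ∈ C.extremePoints 𝕜) :
    C.extremePoints 𝕜 \ line[𝕜, a, b] = C.extremePoints 𝕜 \ {a, b} := by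
  ext v
  refine and_congr_right fun hv ↦ not_congr ⟨fun hvL ↦ ?_, ?_⟩
  · have hv_seg : v ∈ segment 𝕜 a b :=
      inter_line_eq_segment_of_mem_extremePoints hC ha hb ▸ ⟨hv.1, hvL⟩
    simpa [eq_comm] using (mem_extremePoints_iff_forall_segment.1 hv).2 a ha.1 b hb.1 hv_seg
  · rintro (rfl | rfl)
    exacts [left_mem_affineSpan_pair 𝕜 _ _, right_mem_affineSpan_pair 𝕜 _ _]

theorem isExtreme_segment_iff_disjoint_line (hC : convexHull 𝕜 (C.extremePoints 𝕜) = C)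
    (ha : a ∈ C.extremePoints 𝕜) (hb : b ∈ C.extremePoints 𝕜) :
    IsExtreme 𝕜 C (segment 𝕜 a b) ↔
      Disjoint (line[𝕜, a, b] : Set E) (convexHull 𝕜 (C.extremePoints 𝕜 \ {a, b})) := by
  have hconv : Convex 𝕜 C := hC ▸ convex_convexHull 𝕜 _
  have h := isExtreme_convexHull_inter_coe_iff (L := line[𝕜, a, b]) (V := C.extremePoints 𝕜)
  rwa [hC, inter_line_eq_segment_of_mem_extremePoints hconv ha hb,
    extremePoints_sdiff_line hconv ha hb] at h

theorem mem_line_iff_exists_pos_sub_eq_smul_sub (hC : Convex 𝕜 C) (ha : a ∈ C.extremePoints 𝕜)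
    (hb : b ∈ C.extremePoints 𝕜) (hy : y ∈ C) (hyb : y ≠ b) :
    y ∈ line[𝕜, a, b] ↔ ∃ t : 𝕜, 0 < t ∧ a - b = t • (y - b) := by
  constructor
  · intro hyL
    have hy_seg : y ∈ segment 𝕜 b a := by
      rw [segment_symm, ← inter_line_eq_segment_of_mem_extremePoints hC ha hb]
      exact ⟨hy, hyL⟩
    rw [segment_eq_image'] at hy_seg
    obtain ⟨r, ⟨hr, -⟩, rfl⟩ := hy_seg
    have hr' : r ≠ 0 := by rintro rfl; simp at hyb
    exact ⟨r⁻¹, by positivity, by simp [hr']⟩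
  · rintro ⟨t, ht, hab⟩
    have hy_eq : y = AffineMap.lineMap b a t⁻¹ := by
      simp [AffineMap.lineMap_apply, hab, ht.ne']
    rw [hy_eq, pair_comm]
    exact AffineMap.lineMap_mem_affineSpan_pair _ _ _

end ExtremePoints

theorem exists_pos_sum_smul_sub_iff_exists_mem_convexHull {W : Set E} {b c : E} :
    (∃ k : ℕ, 1 ≤ k ∧ ∃ (v : Fin k → E) (γ : Fin k → 𝕜),
      (∀ i, v i ∈ W) ∧ (∀ i, 0 < γ i) ∧ c = ∑ i, γ i • (v i - b)) ↔
      ∃ y ∈ convexHull 𝕜 W, ∃ t : 𝕜, 0 < t ∧ c = t • (y - b) := by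
  constructor
  · rintro ⟨k, hk, v, γ, hv, hγ, rfl⟩
    have : NeZero k := ⟨by omega⟩
    have hsum : 0 < ∑ i, γ i := Finset.sum_pos (fun i _ ↦ hγ i) Finset.univ_nonempty
    refine ⟨Finset.univ.centerMass γ v, Finset.centerMass_mem_convexHull _ (fun i _ ↦ (hγ i).le)
      hsum (fun i _ ↦ hv i), ∑ i, γ i, hsum, ?_⟩
    simp only [Finset.centerMass, smul_sub, smul_inv_smul₀ hsum.ne', Finset.sum_sub_distrib,
      Finset.sum_smul]
  · rintro ⟨y, hy, t, ht, rfl⟩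
    obtain ⟨ι, _, v, w, hv, -, hw, hw_sum, rfl⟩ := eq_pos_convex_span_of_mem_convexHull hy
    have : Nonempty ι := by
      by_contra h
      simp [not_nonempty_iff.1 h] at hw_sum
    let e := (Fintype.equivFin ι).symm
    refine ⟨Fintype.card ι, Fintype.card_pos, v ∘ e, fun i ↦ t * w (e i),
      fun i ↦ hv (mem_range_self _), fun i ↦ mul_pos ht (hw _), ?_⟩
    calc t • (∑ i, w i • v i - b) = ∑ i, (t * w i) • (v i - b) := by
          simp only [mul_smul, ← Finset.smul_sum, smul_sub, Finset.sum_sub_distrib,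
            ← Finset.sum_smul, hw_sum, one_smul]
      _ = ∑ j, (t * w (e j)) • (v (e j) - b) := (e.sum_comp fun i ↦ (t * w i) • (v i - b)).symm

theorem convexHull_extremePoints_convexHull_of_finite {F : Type*} [AddCommGroup F] [Module ℝ F]
    [TopologicalSpace F] [T2Space F] [IsTopologicalAddGroup F] [ContinuousSMul ℝ F]
    [LocallyConvexSpace ℝ F] {s : Set F} (hs : s.Finite) :
    convexHull ℝ ((convexHull ℝ s).extremePoints ℝ) = convexHull ℝ s := by
  have hfin : ((convexHull ℝ s).extremePoints ℝ).Finite :=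
    hs.subset extremePoints_convexHull_subset
  rw [← (hfin.isClosed_convexHull (𝕜 := ℝ)).closure_eq]
  exact closure_convexHull_extremePoints (hs.isCompact_convexHull (𝕜 := ℝ)) (convex_convexHull ℝ s)

theorem not_edge_iff_general {C : Set E} (hC : convexHull 𝕜 (C.extremePoints 𝕜) = C) {a b : E}
    (ha : a ∈ C.extremePoints 𝕜) (hb : b ∈ C.extremePoints 𝕜) :
    ¬ IsExtreme 𝕜 C (segment 𝕜 a b) ↔
      ∃ k : ℕ, 1 ≤ k ∧ ∃ (v : Fin k → E) (γ : Fin k → 𝕜),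
        (∀ i, v i ∈ C.extremePoints 𝕜) ∧ (∀ i, v i ≠ a) ∧ (∀ i, v i ≠ b) ∧ (∀ i, 0 < γ i) ∧
          a - b = ∑ i, γ i • (v i - b) := by
  have hconv : Convex 𝕜 C := hC ▸ convex_convexHull 𝕜 _
  set Q := convexHull 𝕜 (C.extremePoints 𝕜 \ {a, b})
  have hQC : Q ⊆ C := convexHull_min (sdiff_subset.trans extremePoints_subset) hconv
  have hbQ : b ∉ Q := fun h ↦ (hconv.mem_extremePoints_iff_mem_sdiff_convexHull_sdiff.1 hb).2 <|
    convexHull_mono (sdiff_subset_sdiff extremePoints_subset (by simp)) h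
  calc ¬ IsExtreme 𝕜 C (segment 𝕜 a b)
      ↔ ∃ y ∈ Q, y ∈ line[𝕜, a, b] := by
        rw [isExtreme_segment_iff_disjoint_line hC ha hb, disjoint_comm, not_disjoint_iff]; rfl
    _ ↔ ∃ y ∈ Q, ∃ t : 𝕜, 0 < t ∧ a - b = t • (y - b) :=
        exists_congr fun y ↦ and_congr_right fun hy ↦
          mem_line_iff_exists_pos_sub_eq_smul_sub hconv ha hb (hQC hy) (ne_of_mem_of_not_mem hy hbQ)
    _ ↔ _ := by
        rw [← exists_pos_sum_smul_sub_iff_exists_mem_convexHull]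
        simp only [mem_sdiff, mem_insert_iff, mem_singleton_iff, not_or, forall_and, and_assoc]

/-- Two distinct vertices `a`, `b` of a polytope `P = conv(s)` do *not* form an edge of `P`
iff `a - b` is a positive combination of differences `vᵢ - b` for some vertices `vᵢ` of `P`
distinct from `a` and `b`. -/
theorem not_edge_iff {d : ℕ} (s : Finset (Fin d → ℝ))
    (a b : Fin d → ℝ)
    (ha : a ∈ Set.extremePoints ℝ (convexHull ℝ (s : Set (Fin d → ℝ))))
    (hb : b ∈ Set.extremePoints ℝ (convexHull ℝ (s : Set (Fin d → ℝ))))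
    (hab : a ≠ b) :
    ¬ IsExtreme ℝ (convexHull ℝ (s : Set (Fin d → ℝ))) (segment ℝ a b) ↔
      ∃ (k : ℕ), 1 ≤ k ∧
        ∃ (v : Fin k → (Fin d → ℝ)) (γ : Fin k → ℝ),
          (∀ i, v i ∈ Set.extremePoints ℝ (convexHull ℝ (s : Set (Fin d → ℝ)))) ∧
          (∀ i, v i ≠ a) ∧ (∀ i, v i ≠ b) ∧ (∀ i, 0 < γ i) ∧
          a - b = ∑ i, γ i • (v i - b) :=
  not_edge_iff_general (convexHull_extremePoints_convexHull_of_finite s.finite_toSet) ha hb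
end
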